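/- Let P = {P_n : n < ω} be a partition of ω into infinitely many infinite sets with min P_i < min P_j whenever i < j. Then a subset 𝓧 ⊆ 𝓔^P_∞ has the property of Baire with respect to the Ellentuck topology if and only if 𝓧 is Ramsey; moreover, 𝓧 is Ellentuck-meagre if and only if 𝓧 is Ramsey null. (That is, (𝓔^P_∞, ≤, r) is a topological Ramsey space.) -/

import Mathlib

open Set

namespace DualRamsey

/-- `F` is a coarsening of `E` (written `F ≤ E` in the paper): every class of `F`
is a union of classes of `E`. -/
def Coarsens {X : Type*} (F E : Setoid X) : Prop := ∀ a b, E.r a b → F.r a b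

/-- The set of equivalence classes of a setoid. -/
def classes {X : Type*} (E : Setoid X) : Set (Set X) := {C | ∃ x, C = {y | E.r x y}}

/-- The set of minimal representatives of the classes of an equivalence relation on ℕ. -/
def minReps (E : Setoid ℕ) : Set ℕ := {n | ∀ m, E.r n m → n ≤ m}

/-- `pRep E k` is `p_k(E)`, the k-th minimal representative in increasing order. -/
noncomputable def pRep (E : Setoid ℕ) (k : ℕ) : ℕ := Nat.nth (· ∈ minReps E) k

/-- `approx n E` is the n-th approximation `r_n(E)`: `E` restricted to `{0,…,p_n(E)-1}`,
identified with its graph. -/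
noncomputable def approx (n : ℕ) (E : Setoid ℕ) : Set (ℕ × ℕ) :=
  {q | q.1 < pRep E n ∧ q.2 < pRep E n ∧ E.r q.1 q.2}

/-- Basic set `[a, E]` relative to a space `S` of equivalence relations. -/
noncomputable def basicSet (S : Set (Setoid ℕ)) (a : Set (ℕ × ℕ)) (E : ↥S) : Set ↥S :=
  {F | Coarsens F.1 E.1 ∧ ∃ n, approx n F.1 = a}

/-- The Ellentuck topology on a space `S` of equivalence relations. -/
noncomputable def ellentuckTop (S : Set (Setoid ℕ)) : TopologicalSpace ↥S :=
  TopologicalSpace.generateFrom {U | ∃ a E, U = basicSet S a E}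

def IsRamsey (S : Set (Setoid ℕ)) (X : Set ↥S) : Prop :=
  ∀ (a : Set (ℕ × ℕ)) (B : ↥S), (basicSet S a B).Nonempty →
    ∃ A ∈ basicSet S a B, basicSet S a A ⊆ X ∨ basicSet S a A ∩ X = ∅

def IsRamseyNull (S : Set (Setoid ℕ)) (X : Set ↥S) : Prop :=
  ∀ (a : Set (ℕ × ℕ)) (B : ↥S), (basicSet S a B).Nonempty →
    ∃ A ∈ basicSet S a B, basicSet S a A ∩ X = ∅

/-- The property of Baire with respect to the Ellentuck topology. -/
noncomputable def HasBP (S : Set (Setoid ℕ)) (X : Set ↥S) : Prop :=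
  ∃ O M : Set ↥S, (ellentuckTop S).IsOpen O ∧ @IsMeagre _ (ellentuckTop S) M ∧
    X = (O \ M) ∪ (M \ O)

/-- The Souslin operation applied to a scheme indexed by finite sequences of naturals. -/
def souslinOp {X : Type*} (A : List ℕ → Set X) : Set X :=
  ⋃ x : ℕ → ℕ, ⋂ n : ℕ, A ((List.range n).map x)

/-- `Y` belongs to the smallest field of sets containing all `t`-open sets and
closed under the Souslin operation. -/
def SouslinMeasurable {X : Type*} (t : TopologicalSpace X) (Y : Set X) : Prop :=
  ∀ 𝒜 : Set (Set X),
    (∀ U, t.IsOpen U → U ∈ 𝒜) →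
    (∀ A ∈ 𝒜, Aᶜ ∈ 𝒜) →
    (∀ A ∈ 𝒜, ∀ B ∈ 𝒜, A ∪ B ∈ 𝒜) →
    (∀ f : List ℕ → Set X, (∀ s, f s ∈ 𝒜) → souslinOp f ∈ 𝒜) →
    Y ∈ 𝒜

/-- The graph of an equivalence relation as a boolean-valued function. -/
noncomputable def graphMap {X : Type*} (E : Setoid X) : X × X → Bool :=
  fun q => @decide (E.r q.1 q.2) (Classical.dec _)

/-- The metrizable topology on a space of equivalence relations, as a subspace of
`2^(X × X)` via graphs. -/
noncomputable def graphTop {X : Type*} (S : Set (Setoid X)) : TopologicalSpace ↥S :=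
  TopologicalSpace.induced (fun E => graphMap E.1) inferInstance



/-- `σ(k)`: the largest `n` such that `2^n` divides `k+1`. -/
def sigmaSeq (k : ℕ) : ℕ := padicValNat 2 (k + 1)

/-- `𝓔^P_∞` for a partition `P` of ℕ into infinitely many infinite pieces: the
`P`-alternating equivalence relations, i.e. those with infinitely many classes whose
`k`-th minimal representative lies in `P (σ k)`. -/
noncomputable def EPaltInf (P : ℕ → Set ℕ) : Set (Setoid ℕ) :=
  {E | (classes E).Infinite ∧ ∀ k : ℕ, pRep E k ∈ P (sigmaSeq k)}

/-!
A partition is encoded by a labelling `τ` of ℕ, and of the sequence `σ` it only matters that it is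
Toeplitz: each of its values is repeated along an arithmetic progression.

For a topological Ramsey space the essential point is the pigeonhole principle: given `F` and a
colouring of the `(n + 1)`-th approximations, some `A ∈ [r_n(F), F]` makes the colour of
`r_{n+1}(G)` the same for all `G ∈ [r_n(A), A]`. These approximations are coded by words over the
alphabet `{0, …, n}`: the length of the word tells which minimal representative of `F` is the next
one of `G`, and its letters tell how the ones in between are merged with the first `n + 1`. The
principle becomes an infinite Carlson–Simpson theorem for variable words, where the first
occurrences of the variables have to sit at positions with prescribed values of `σ`. It is proved
with an ultrafilter `w` on the set of words which lies below a minimal idempotent, in the manner of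
Furstenberg and Katznelson: such a `w` absorbs substitution instances of suitable variable words.
Words with lengths divisible by `D` have `w`-measure one, so by the Toeplitz property the lengths
at which the colour matters all have the value `σ 0`.

Basic sets are closed under fusion. A diagonal argument along a fusion sequence together with the
pigeonhole principle shows, by the combinatorial forcing of Nash-Williams and Galvin–Prikry, that
open sets are Ramsey. A second diagonalization, through countably many dense open sets, shows that
meagre sets are Ramsey null.
-/

section MinimalIdempotents

/-- `v` is a minimal idempotent of a semigroup: it is idempotent, and it generates a minimal left
ideal, i.e. each `x * v` generates the same left ideal as `v`. -/
structure IsMinimalIdempotent {S : Type*} [Semigroup S] (v : S) : Prop where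
  mul_self : v * v = v
  exists_mul_mul_eq : ∀ x, ∃ q, q * (x * v) = v

variable {S T : Type*} [Semigroup S] [Semigroup T]

namespace IsMinimalIdempotent

theorem eq_of_le {w f : S} (hw : IsMinimalIdempotent w) (hf : f * f = f) (hwf : w * f = f)
    (hfw : f * w = f) : f = w := by
  obtain ⟨q, hq⟩ := hw.exists_mul_mul_eq f
  rw [hfw] at hq
  rw [← hwf, ← hq, mul_assoc, hf]

/-- In the group `v * S * v` left inverses are right inverses. -/
theorem exists_mul_mul_right_eq {v : S} (hv : IsMinimalIdempotent v) (x : S) :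
    ∃ q, v * (x * q) = v := by
  have left_inverse (y : S) : ∃ p, v * p = p ∧ p * v = p ∧ p * (y * v) = v := by
    obtain ⟨p, hp⟩ := hv.exists_mul_mul_eq (v * y)
    refine ⟨v * p * v, ?_, ?_, ?_⟩
    · simp only [← mul_assoc, hv.mul_self]
    · simp only [mul_assoc, hv.mul_self]
    · rw [mul_assoc, mul_assoc, ← mul_assoc v y, hp, hv.mul_self]
  obtain ⟨p, hvp, hpv, hp⟩ := left_inverse x
  obtain ⟨p', -, -, hp'⟩ := left_inverse p
  rw [hpv] at hp'
  refine ⟨p, ?_⟩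
  calc v * (x * p) = p' * p * (x * p) := by rw [hp']
    _ = p' * (p * (x * v) * p) := by simp only [mul_assoc, hvp]
    _ = v := by rw [hp, hvp, hp']

end IsMinimalIdempotent

variable [TopologicalSpace S] [CompactSpace S]

theorem exists_minimal_closed_left_ideal {I : Set S} (hI : IsClosed I) (hne : I.Nonempty)
    (hl : ∀ s, ∀ x ∈ I, s * x ∈ I) :
    ∃ M ⊆ I, Minimal (· ∈ {N : Set S | IsClosed N ∧ N.Nonempty ∧ ∀ s, ∀ x ∈ N, s * x ∈ N}) M := by
  refine zorn_superset_nonempty _ (fun c hcs hc hcne => ?_) I ⟨hI, hne, hl⟩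
  refine ⟨⋂₀ c, ⟨isClosed_sInter fun t ht => (hcs ht).1, ?_, fun s x hx t ht =>
    (hcs ht).2.2 s x (hx t ht)⟩, fun s hs => sInter_subset_of_mem hs⟩
  have := hcne.coe_sort
  rw [sInter_eq_iInter]
  exact IsCompact.nonempty_iInter_of_directed_nonempty_isCompact_isClosed _
    (DirectedOn.directed_val (IsChain.directedOn hc.symm)) (fun i => (hcs i.prop).2.1)
    (fun i => (hcs i.prop).1.isCompact) (fun i => (hcs i.prop).1)

variable [T2Space S]

theorem exists_isMinimalIdempotent_mem (hS : ∀ r : S, Continuous (· * r)) {I : Set S}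
    (hI : IsClosed I) (hne : I.Nonempty) (hl : ∀ s, ∀ x ∈ I, s * x ∈ I) :
    ∃ v ∈ I, IsMinimalIdempotent v := by
  obtain ⟨M, hMI, hM⟩ := exists_minimal_closed_left_ideal hI hne hl
  obtain ⟨hMc, hMne, hMl⟩ := hM.prop
  obtain ⟨v, hv, hvv⟩ := exists_idempotent_in_compact_subsemigroup hS M hMne hMc.isCompact
    (fun x _ y hy => hMl x y hy)
  refine ⟨v, hMI hv, hvv, fun x => ?_⟩
  have hM_subset : M ⊆ range (· * (x * v)) := by
    refine hM.le_of_le ⟨(isCompact_range (hS _)).isClosed, ⟨_, v, rfl⟩, ?_⟩ ?_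
    · rintro s _ ⟨q, rfl⟩
      exact ⟨s * q, mul_assoc _ _ _⟩
    · rintro _ ⟨q, rfl⟩
      exact hMl _ _ (hMl _ _ hv)
  exact hM_subset hv

theorem exists_isMinimalIdempotent_le (hS : ∀ r : S, Continuous (· * r)) {e : S} (he : e * e = e) :
    ∃ v, IsMinimalIdempotent v ∧ e * v = v ∧ v * e = v := by
  obtain ⟨u, ⟨y, rfl⟩, hu⟩ := exists_isMinimalIdempotent_mem hS (I := range (· * e))
    (isCompact_range (hS _)).isClosed ⟨_, e, rfl⟩ (by
      rintro s _ ⟨q, rfl⟩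
      exact ⟨s * q, mul_assoc _ _ _⟩)
  have hue : y * e * e = y * e := by rw [mul_assoc, he]
  refine ⟨e * (y * e), ⟨?_, fun x => ?_⟩, ?_, ?_⟩
  · rw [mul_assoc, ← mul_assoc (y * e) e, hue, hu.mul_self]
  · obtain ⟨q, hq⟩ := hu.exists_mul_mul_eq (x * e)
    exact ⟨e * q, by rw [mul_assoc, ← mul_assoc x, hq]⟩
  · rw [← mul_assoc, he]
  · rw [mul_assoc, hue]

/-- Below the minimal idempotent `w`, transported to `S`, there is a minimal idempotent `v`, and
every retraction `f a` has to map it back to `w`. -/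
theorem exists_idempotent_mul_retraction_eq [TopologicalSpace T] [CompactSpace T] [T2Space T]
    [Nonempty T] (hS : ∀ r : S, Continuous (· * r)) (hT : ∀ r : T, Continuous (· * r)) {A : Type*}
    (i : T →ₙ* S) (f : A → S →ₙ* T) (hfi : ∀ a x, f a (i x) = x) :
    ∃ w : T, w * w = w ∧ ∀ r, ∃ q, ∀ a, w * f a (r * q) = w := by
  obtain ⟨w, -, hw⟩ := exists_isMinimalIdempotent_mem hT isClosed_univ univ_nonempty
    (fun _ _ _ => trivial)
  obtain ⟨v, hv, hwv, hvw⟩ := exists_isMinimalIdempotent_le hS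
    (show i w * i w = i w by rw [← map_mul, hw.mul_self])
  have hfv (a : A) : f a v = w := hw.eq_of_le (by rw [← map_mul, hv.mul_self])
    (by simpa only [map_mul, hfi] using congrArg (f a) hwv)
    (by simpa only [map_mul, hfi] using congrArg (f a) hvw)
  refine ⟨w, hw.mul_self, fun r => ?_⟩
  obtain ⟨q, hq⟩ := hv.exists_mul_mul_right_eq r
  exact ⟨q, fun a => by rw [← hfv a, ← map_mul, hq]⟩

end MinimalIdempotents

section UltrafiltersOnWords

attribute [local instance] Ultrafilter.mul Ultrafilter.semigroup

/-- The multiplicative map on ultrafilters induced by a multiplicative map. -/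
def ultrafilterMap {M N : Type*} [Semigroup M] [Semigroup N] (g : M →ₙ* N) :
    Ultrafilter M →ₙ* Ultrafilter N where
  toFun U := U.map g
  map_mul' U V := by
    refine Ultrafilter.coe_inj.mp (Filter.ext' fun p => ?_)
    simp only [Ultrafilter.eventually_mul, Ultrafilter.coe_map, Filter.eventually_map, map_mul]

theorem exists_idempotent_ultrafilter_mul_retraction_eq {M N A : Type*} [Semigroup M] [Semigroup N]
    [Nonempty N] (i : N →ₙ* M) (f : A → M →ₙ* N) (hfi : ∀ a x, f a (i x) = x) :
    ∃ w : Ultrafilter N, w * w = w ∧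
      ∀ r, ∃ q, ∀ a, w * ultrafilterMap (f a) (r * q) = w := by
  refine exists_idempotent_mul_retraction_eq Ultrafilter.continuous_mul_left
    Ultrafilter.continuous_mul_left (ultrafilterMap i) (fun a => ultrafilterMap (f a))
    fun a U => ?_
  change (U.map i).map (f a) = U
  rw [Ultrafilter.map_map, show f a ∘ i = id from funext (hfi a), Ultrafilter.map_id]

variable {L : Type*}

/-- `substNone a u` replaces the variable `none` of the variable word `u` by the letter `a`. -/
def substNone (a : L) (u : List (Option L)) : List L := u.map (·.getD a)

/-- An ultrafilter `w` on words is absorbing if it is idempotent for concatenation and every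
variable word `r` can be prolonged, `q`-almost surely for some ultrafilter `q`, to a variable word
all of whose substitution instances are absorbed by `w`. -/
structure IsAbsorbing (w : Ultrafilter (List L)) : Prop where
  eventually_append : ∀ {p : List L → Prop}, (∀ᶠ u in w, p u) → ∀ᶠ u in w, ∀ᶠ v in w, p (u ++ v)
  exists_eventually_subst : ∀ r : List (Option L), ∃ q : Ultrafilter (List (Option L)),
    ∀ a, ∀ {p : List L → Prop}, (∀ᶠ u in w, p u) →
      ∀ᶠ u in w, ∀ᶠ z in q, p (u ++ substNone a (r ++ z))

theorem exists_isAbsorbing (L : Type*) : ∃ w : Ultrafilter (List L), IsAbsorbing w := by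
  obtain ⟨w, hww, hw⟩ := exists_idempotent_ultrafilter_mul_retraction_eq (A := L)
    (FreeMonoid.map some).toMulHom (fun a => (FreeMonoid.map fun o : Option L => o.getD a).toMulHom)
    (fun a x => FreeMonoid.map_map.trans (DFunLike.congr_fun FreeMonoid.map_id x))
  refine ⟨w, ⟨fun {p} hp => ?_, fun r => ?_⟩⟩
  · rwa [← hww] at hp
  obtain ⟨q, hq⟩ := hw (pure r)
  refine ⟨q, fun a {p} hp => ?_⟩
  rw [← hq a] at hp
  exact hp

/-- The image of `w` in `ℤ/D` is a principal idempotent, hence concentrated at `0`. -/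
theorem IsAbsorbing.eventually_dvd_length {w : Ultrafilter (List L)} (hw : IsAbsorbing w) {D : ℕ}
    (hD : 0 < D) : ∀ᶠ u : List L in w, D ∣ u.length := by
  have : NeZero D := ⟨hD.ne'⟩
  let residue (u : List L) : ZMod D := u.length
  obtain ⟨c, hwc⟩ := (w.map residue).eq_pure_of_finite
  have hc : ∀ᶠ u in w, residue u = c :=
    show {c} ∈ w.map residue by rw [hwc]; exact mem_singleton c
  obtain ⟨u, hu, hu'⟩ := (hc.and (hw.eventually_append hc)).exists
  obtain ⟨v, hv, huv⟩ := (hc.and hu').exists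
  have hc0 : c = 0 := by
    simp only [residue, List.length_append, Nat.cast_add] at hu hv huv
    rwa [hu, hv, add_eq_left] at huv
  exact hc.mono fun u hu => (ZMod.natCast_eq_zero_iff _ _).mp (hu.trans hc0)

end UltrafiltersOnWords

section Toeplitz

variable {ι : Type*} {σ : ℕ → ι}

/-- A Toeplitz sequence: each position recurs, with its value, along an infinite arithmetic
progression. -/
def IsToeplitz (σ : ℕ → ι) : Prop := ∀ n, ∃ D > 0, ∀ k, σ (n + D * k) = σ n

theorem IsToeplitz.comp_add_left (hσ : IsToeplitz σ) (n : ℕ) : IsToeplitz fun i => σ (n + i) := by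
  intro i
  obtain ⟨D, hD, h⟩ := hσ (n + i)
  exact ⟨D, hD, fun k => by simp only [← add_assoc, h]⟩

theorem IsToeplitz.exists_bounded_gap (hσ : IsToeplitz σ) (i : ℕ) :
    ∃ b, ∀ n, ∃ d ≤ b, σ (n + d) = σ i := by
  obtain ⟨D, hD, h⟩ := hσ i
  refine ⟨i + D, fun n => ⟨i + (D - n % D), by omega, ?_⟩⟩
  have hn : n + (i + (D - n % D)) = i + D * (n / D + 1) := by
    have := Nat.div_add_mod n D
    have := Nat.mod_lt n hD
    rw [mul_add]
    omega
  rw [hn, h]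

theorem IsToeplitz.frequently_eq (hσ : IsToeplitz σ) (i : ℕ) :
    ∃ᶠ n in Filter.atTop, σ n = σ i := by
  obtain ⟨b, hb⟩ := hσ.exists_bounded_gap i
  refine Filter.frequently_atTop.mpr fun n => ?_
  obtain ⟨d, -, hd⟩ := hb n
  exact ⟨n + d, Nat.le_add_right n d, hd⟩

theorem isToeplitz_sigmaSeq : IsToeplitz sigmaSeq := by
  intro n
  refine ⟨2 ^ (sigmaSeq n + 1), by positivity, fun k => ?_⟩
  have hdvd (m e : ℕ) : 2 ^ e ∣ m + 1 ↔ e ≤ sigmaSeq m :=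
    padicValNat_dvd_iff_le m.succ_ne_zero
  have hshift (e : ℕ) (he : e ≤ sigmaSeq n + 1) :
      e ≤ sigmaSeq (n + 2 ^ (sigmaSeq n + 1) * k) ↔ e ≤ sigmaSeq n := by
    rw [← hdvd, ← hdvd, add_right_comm, Nat.dvd_add_left ((pow_dvd_pow 2 he).mul_right k)]
  have := hshift (sigmaSeq n) (by omega)
  have := hshift (sigmaSeq n + 1) le_rfl
  omega

end Toeplitz

section VariableWords

variable {ι L : Type*} {σ : ℕ → ι}

section Step

variable [Finite L] {C : List L → Prop} {D : ℕ} {w : Ultrafilter (List L)}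

theorem IsAbsorbing.exists_prolongation (hw : IsAbsorbing w) (hD : 0 < D) {U : Set (List L)}
    (hU : U.Finite) (hUC : ∀ u ∈ U, ∀ᶠ x in w, C (u ++ x)) (a₀ : L) (b : ℕ) :
    ∃ x : List L, D ∣ x.length ∧ (∀ u ∈ U, C (u ++ x)) ∧ ∀ d ≤ b, ∃ z : List (Option L),
      D ∣ x.length + d + 1 + z.length ∧ ∀ u ∈ U, ∀ a, ∀ᶠ y in w,
        C (u ++ (x ++ List.replicate d a₀ ++ a :: substNone a z ++ y)) := by
  let r (d : ℕ) : List (Option L) := List.replicate d (some a₀) ++ [none]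
  choose q hq using fun d => hw.exists_eventually_subst (r d)
  let p (x : List L) : Prop := D ∣ x.length ∧ ∀ u ∈ U, ∀ᶠ y in w, C (u ++ (x ++ y))
  have hp : ∀ᶠ x in w, p x := (hw.eventually_dvd_length hD).and <|
    (Filter.eventually_all_finite hU).mpr fun u hu => hw.eventually_append (hUC u hu)
  have hpq : ∀ᶠ x in w, ∀ d ∈ Iic b, ∀ a, ∀ᶠ z in q d, p (x ++ substNone a (r d ++ z)) :=
    (Filter.eventually_all_finite (finite_Iic b)).mpr fun d _ =>
      Filter.eventually_all.mpr fun a => hq d a hp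
  obtain ⟨x, ⟨hxD, hxC, hx⟩⟩ := ((hw.eventually_dvd_length hD).and
    (((Filter.eventually_all_finite hU).mpr hUC).and hpq)).exists
  refine ⟨x, hxD, hxC, fun d hd => ?_⟩
  obtain ⟨z, hz⟩ := (Filter.eventually_all.mpr (hx d hd)).exists
  have hsubst (a : L) : x ++ substNone a (r d ++ z) =
      x ++ List.replicate d a₀ ++ a :: substNone a z := by
    simp [substNone, r]
  simp only [hsubst] at hz
  refine ⟨z, ?_, fun u hu a => (hz a).2 u hu⟩
  have := (hz a₀).1
  simpa [substNone, add_assoc, add_comm 1] using this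

theorem IsAbsorbing.exists_prolongation_of_isToeplitz [Nonempty L] (hw : IsAbsorbing w)
    (hσ : IsToeplitz σ) (hD : 0 < D) (hσD : ∀ j, σ (D * j) = σ 0) {U : Set (List L)}
    (hU : U.Finite) (hUC : ∀ u ∈ U, ∀ᶠ x in w, C (u ++ x)) {n : ℕ} (hn : D ∣ n) (i : ℕ) :
    ∃ (m : List L) (z : List (Option L)), σ (n + m.length) = σ i ∧
      (σ i = σ 0 → ∀ u ∈ U, C (u ++ m)) ∧ D ∣ n + m.length + 1 + z.length ∧
      ∀ u ∈ U, ∀ a, ∀ᶠ y in w, C (u ++ (m ++ a :: substNone a z ++ y)) := by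
  obtain ⟨a₀⟩ := ‹Nonempty L›
  obtain ⟨b, hb⟩ := hσ.exists_bounded_gap i
  obtain ⟨x, ⟨j, hxj⟩, hxC, hx⟩ := hw.exists_prolongation hD hU hUC a₀ b
  obtain ⟨d, hdb, hd, hd0⟩ : ∃ d ≤ b, σ (n + x.length + d) = σ i ∧ (σ i = σ 0 → d = 0) := by
    by_cases hi : σ i = σ 0
    · obtain ⟨k, rfl⟩ := hn
      exact ⟨0, b.zero_le, by rw [hxj, ← mul_add, add_zero, hσD, hi], fun _ => rfl⟩
    · obtain ⟨d, hdb, hd⟩ := hb (n + x.length)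
      exact ⟨d, hdb, hd, fun h => absurd h hi⟩
  obtain ⟨z, hz, hzC⟩ := hx d hdb
  refine ⟨x ++ List.replicate d a₀, z, ?_, fun hi u hu => ?_, ?_, hzC⟩
  · rw [List.length_append, List.length_replicate, ← add_assoc, hd]
  · rw [hd0 hi, List.replicate_zero, List.append_nil]
    exact hxC u hu
  · rw [List.length_append, List.length_replicate]
    simpa only [add_assoc] using dvd_add hn hz

end Step

/-- `instantiate α s` replaces each variable `k` of the word `s` by the letter `α k`. -/
def instantiate (α : ℕ → L) (s : List (L ⊕ ℕ)) : List L := s.map (Sum.elim id α)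

/-- The finite approximations of an infinite variable word: `s` uses only the variables below `k`,
has length divisible by `D`, and each of its instances has `w`-almost all prolongations in `C`. -/
structure IsStage (w : Ultrafilter (List L)) (C : List L → Prop) (D k : ℕ) (s : List (L ⊕ ℕ)) :
    Prop where
  dvd_length : D ∣ s.length
  notMem : ∀ j, k ≤ j → Sum.inr j ∉ s
  eventually : ∀ α, ∀ᶠ x in w, C (instantiate α s ++ x)

theorem IsStage.exists_succ [Finite L] [Nonempty L] {C : List L → Prop} {D k : ℕ}
    {w : Ultrafilter (List L)} {s : List (L ⊕ ℕ)} (hs : IsStage w C D k s) (hw : IsAbsorbing w)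
    (hσ : IsToeplitz σ) (hD : 0 < D) (hσD : ∀ j, σ (D * j) = σ 0) :
    ∃ p s', s <+: p ∧ p ++ [Sum.inr k] <+: s' ∧ Sum.inr k ∉ p ∧ σ p.length = σ k ∧
      (σ k = σ 0 → ∀ α, C (instantiate α p)) ∧ IsStage w C D (k + 1) s' := by
  have hfin : (range fun α => instantiate α s).Finite :=
    (List.finite_length_eq L s.length).subset (by rintro _ ⟨α, rfl⟩; simp [instantiate])
  obtain ⟨m, z, hm, hmC, hz, hzC⟩ := hw.exists_prolongation_of_isToeplitz hσ hD hσD hfin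
    (by rintro _ ⟨α, rfl⟩; exact hs.eventually α) hs.dvd_length k
  let p : List (L ⊕ ℕ) := s ++ m.map Sum.inl
  let z' : List (L ⊕ ℕ) := z.map (·.elim (Sum.inr k) Sum.inl)
  have hp (α : ℕ → L) : instantiate α p = instantiate α s ++ m := by
    simp [instantiate, p, Function.comp_def]
  have hz' (α : ℕ → L) : instantiate α z' = substNone (α k) z := by
    simp only [instantiate, substNone, z', List.map_map]
    exact List.map_congr_left fun o _ => by cases o <;> rfl
  refine ⟨p, p ++ Sum.inr k :: z', List.prefix_append _ _, by simp, ?_, ?_, fun hk α => ?_, ?_⟩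
  · simpa [p] using hs.notMem k le_rfl
  · simpa [p] using hm
  · rw [hp]
    exact hmC hk _ ⟨α, rfl⟩
  refine ⟨by simpa [p, z', add_assoc, add_comm 1] using hz, fun j hj => ?_, fun α => ?_⟩
  · have : Sum.inr j ∉ z' := by
      simp only [z', List.mem_map, not_exists, not_and]
      rintro (_ | a) - <;> simp
      omega
    simp [p, hs.notMem j (by omega), this]
    omega
  · have hsplit : instantiate α (p ++ Sum.inr k :: z') =
        instantiate α s ++ (m ++ α k :: substNone (α k) z) := by
      rw [← hz', ← List.append_assoc, ← hp]
      simp [instantiate]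
    simpa only [hsplit, List.append_assoc] using hzC _ ⟨α, rfl⟩ (α k)

theorem exists_limit_of_prefix_chain {X : Type*} (p : ℕ → List X) (x : ℕ → X)
    (h : ∀ k, p k ++ [x k] <+: p (k + 1)) :
    ∃ W : ℕ → X, ∀ k, p k = (List.range (p k).length).map W ∧ W (p k).length = x k := by
  have hmono {j k : ℕ} (hjk : j ≤ k) : p j <+: p k := by
    induction k, hjk using Nat.le_induction with
    | base => exact List.prefix_rfl
    | succ k _ ih => exact ih.trans ((List.prefix_append _ _).trans (h k))
  have hlen (k : ℕ) : k ≤ (p k).length := by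
    induction k with
    | zero => exact Nat.zero_le _
    | succ k ih =>
      have := (h k).length_le
      simp only [List.length_append, List.length_singleton] at this
      omega
  let W (i : ℕ) : X := (p (i + 1))[i]'(hlen (i + 1))
  have hW (k i : ℕ) (hi : i < (p k).length) : W i = (p k)[i] := by
    rcases le_total k (i + 1) with hk | hk
    · exact ((hmono hk).getElem hi).symm
    · exact (hmono hk).getElem (hlen (i + 1))
  refine ⟨W, fun k => ⟨List.ext_getElem (by simp) fun i hi _ => ?_, ?_⟩⟩
  · simp [hW k i hi]
  · have hk := (h k).length_le
    simp only [List.length_append, List.length_singleton] at hk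
    rw [hW (k + 1) _ hk, ← (h k).getElem (by simp)]
    simp

/-- `W` is an infinite variable word in which the variable `k` occurs for the first time at
position `v k`, these positions being increasing. -/
structure IsVariableWord (W : ℕ → L ⊕ ℕ) (v : ℕ → ℕ) : Prop where
  strictMono : StrictMono v
  apply_eq : ∀ k, W (v k) = Sum.inr k
  le_of_apply_eq : ∀ {i k}, W i = Sum.inr k → v k ≤ i

/-- The colour `C` of the words is constant on the instances of `W` cut off in front of the
variables `k` with `σ k = σ 0`, and the variables of `W` sit at positions of the right value. -/
def IsHomogeneousFor (σ : ℕ → ι) (C : List L → Prop) (W : ℕ → L ⊕ ℕ) (v : ℕ → ℕ) : Prop :=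
  IsVariableWord W v ∧ (∀ k, σ (v k) = σ k) ∧
    ∀ k, σ k = σ 0 → ∀ α, C (instantiate α ((List.range (v k)).map W))

theorem IsAbsorbing.exists_isHomogeneousFor [Finite L] [Nonempty L] {w : Ultrafilter (List L)}
    (hw : IsAbsorbing w) (hσ : IsToeplitz σ) {C : List L → Prop} (hC : ∀ᶠ x in w, C x) :
    ∃ W v, IsHomogeneousFor σ C W v := by
  obtain ⟨D, hD, hσD⟩ := hσ 0
  simp only [zero_add] at hσD
  choose! p s hsp hps hp hσp hpC hs using fun k s (hs : IsStage w C D k s) =>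
    hs.exists_succ hw hσ hD hσD
  let stage (k : ℕ) : {t // IsStage w C D k t} := Nat.rec
    ⟨[], by simp, by simp, fun α => by simpa [instantiate] using hC⟩
    (fun k t => ⟨s k t, hs k t t.2⟩) k
  let P (k : ℕ) : List (L ⊕ ℕ) := p k (stage k).1
  have hP (k : ℕ) : P k ++ [Sum.inr k] <+: P (k + 1) :=
    (hps k _ (stage k).2).trans (hsp (k + 1) _ (stage (k + 1)).2)
  obtain ⟨W, hW⟩ := exists_limit_of_prefix_chain P _ hP
  refine ⟨W, fun k => (P k).length, ⟨strictMono_nat_of_lt_succ fun k => ?_, fun k => (hW k).2,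
    fun {i k} hik => ?_⟩, fun k => hσp k _ (stage k).2, fun k hk α => ?_⟩
  · simpa using (hP k).length_le
  · by_contra! hi
    refine hp k _ (stage k).2 ?_
    change Sum.inr k ∈ P k
    rw [(hW k).1, List.mem_map]
    exact ⟨i, List.mem_range.mpr hi, hik⟩
  · rw [← (hW k).1]
    exact hpC k _ (stage k).2 hk α

theorem IsToeplitz.exists_isHomogeneousFor (hσ : IsToeplitz σ) [Finite L] [Nonempty L]
    (C : List L → Prop) :
    ∃ W v, IsHomogeneousFor σ C W v ∨ IsHomogeneousFor σ (fun x => ¬ C x) W v := by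
  obtain ⟨w, hw⟩ := exists_isAbsorbing L
  rcases w.em C with hC | hC
  · obtain ⟨W, v, h⟩ := hw.exists_isHomogeneousFor hσ hC
    exact ⟨W, v, .inl h⟩
  · obtain ⟨W, v, h⟩ := hw.exists_isHomogeneousFor hσ hC
    exact ⟨W, v, .inr h⟩

end VariableWords

section MinimalRepresentatives

/-- The least element of the class of `x`. -/
noncomputable def rep (E : Setoid ℕ) (x : ℕ) : ℕ := sInf {y | E.r x y}

variable {E F G : Setoid ℕ}

theorem rel_rep (E : Setoid ℕ) (x : ℕ) : E.r x (rep E x) :=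
  Nat.sInf_mem (s := {y | E.r x y}) ⟨x, E.refl x⟩

theorem rep_le_of_rel {x y : ℕ} (h : E.r x y) : rep E x ≤ y := Nat.sInf_le h

theorem rep_le (E : Setoid ℕ) (x : ℕ) : rep E x ≤ x := rep_le_of_rel (E.refl x)

theorem rep_zero (E : Setoid ℕ) : rep E 0 = 0 := Nat.le_zero.mp (rep_le E 0)

theorem rep_eq_of_rel {x y : ℕ} (h : E.r x y) : rep E x = rep E y :=
  le_antisymm (rep_le_of_rel (E.trans h (rel_rep E y)))
    (rep_le_of_rel (E.trans (E.symm h) (rel_rep E x)))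

theorem rel_iff_rep_eq {x y : ℕ} : E.r x y ↔ rep E x = rep E y :=
  ⟨rep_eq_of_rel, fun h => E.trans (rel_rep E x) (h ▸ E.symm (rel_rep E y))⟩

theorem rep_rep (E : Setoid ℕ) (x : ℕ) : rep E (rep E x) = rep E x :=
  (rep_eq_of_rel (rel_rep E x)).symm

theorem mem_minReps_iff {x : ℕ} : x ∈ minReps E ↔ rep E x = x :=
  ⟨fun h => le_antisymm (rep_le E x) (h _ (rel_rep E x)), fun h _ hm =>
    h.symm.trans_le (rep_le_of_rel hm)⟩

theorem rep_mem_minReps (E : Setoid ℕ) (x : ℕ) : rep E x ∈ minReps E :=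
  mem_minReps_iff.mpr (rep_rep E x)

theorem infinite_classes_iff : (classes E).Infinite ↔ (minReps E).Infinite := by
  have hinj : InjOn (fun x => {y | E.r x y}) (minReps E) := fun x hx y hy h => by
    have hxy : E.r x y := h.symm.subset (E.refl y)
    rw [← mem_minReps_iff.mp hx, ← mem_minReps_iff.mp hy, rep_eq_of_rel hxy]
  have himage : (fun x => {y | E.r x y}) '' minReps E = classes E := by
    refine subset_antisymm (by rintro _ ⟨x, -, rfl⟩; exact ⟨x, rfl⟩) ?_
    rintro _ ⟨x, rfl⟩
    refine ⟨rep E x, rep_mem_minReps E x, ext fun y => ?_⟩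
    exact ⟨E.trans (rel_rep E x), E.trans (E.symm (rel_rep E x))⟩
  rw [← himage, infinite_image_iff hinj]

theorem coarsens_iff : Coarsens F E ↔ ∀ x, rep F (rep E x) = rep F x := by
  refine ⟨fun h x => (rep_eq_of_rel (h _ _ (rel_rep E x))).symm, fun h x y hxy => ?_⟩
  rw [rel_iff_rep_eq, ← h x, ← h y, rep_eq_of_rel hxy]

theorem Coarsens.refl (E : Setoid ℕ) : Coarsens E E := fun _ _ => id

theorem Coarsens.trans (hGF : Coarsens G F) (hFE : Coarsens F E) : Coarsens G E :=
  fun a b h => hGF a b (hFE a b h)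

theorem Coarsens.minReps_subset (h : Coarsens F E) : minReps F ⊆ minReps E :=
  fun _ hx m hm => hx m (h _ m hm)

theorem rep_ker {f : ℕ → ℕ} (hle : ∀ x, f x ≤ x) (hf : ∀ x, f (f x) = f x) (x : ℕ) :
    rep (Setoid.ker f) x = f x := by
  refine le_antisymm (rep_le_of_rel (hf x).symm) ?_
  have h : f x = f (rep (Setoid.ker f) x) := rel_rep (Setoid.ker f) x
  exact h.trans_le (hle _)

theorem exists_coarsens_rep_eq {φ : ℕ → ℕ} (hle : ∀ y ∈ minReps E, φ y ≤ y)
    (hmem : ∀ y ∈ minReps E, φ y ∈ minReps E) (hφ : ∀ y ∈ minReps E, φ (φ y) = φ y) :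
    ∃ A, Coarsens A E ∧ (∀ x, rep A x = φ (rep E x)) ∧
      minReps A = {x ∈ minReps E | φ x = x} := by
  let A := Setoid.ker fun x => φ (rep E x)
  have hA (x : ℕ) : rep A x = φ (rep E x) := by
    refine rep_ker (fun x => (hle _ (rep_mem_minReps E x)).trans (rep_le E x)) (fun x => ?_) x
    rw [mem_minReps_iff.mp (hmem _ (rep_mem_minReps E x)), hφ _ (rep_mem_minReps E x)]
  refine ⟨A, coarsens_iff.mpr fun x => by simp only [hA, rep_rep], hA, ext fun x => ?_⟩
  rw [mem_minReps_iff, hA, mem_ofPred_eq]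
  constructor
  · intro h
    have hx : x ∈ minReps E := h ▸ hmem _ (rep_mem_minReps E x)
    exact ⟨hx, by rwa [mem_minReps_iff.mp hx] at h⟩
  · rintro ⟨hx, h⟩
    rw [mem_minReps_iff.mp hx, h]

theorem pRep_mem (hE : (minReps E).Infinite) (k : ℕ) : pRep E k ∈ minReps E :=
  Nat.nth_mem_of_infinite hE k

theorem strictMono_pRep (hE : (minReps E).Infinite) : StrictMono (pRep E) :=
  Nat.nth_strictMono hE

theorem range_pRep (hE : (minReps E).Infinite) : range (pRep E) = minReps E :=
  Nat.range_nth_of_infinite hE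

theorem pRep_eq_of_range_eq {a : ℕ → ℕ} (ha : StrictMono a) (h : range a = minReps E) :
    pRep E = a := by
  have hE : (minReps E).Infinite := h ▸ infinite_range_of_injective ha.injective
  exact ((strictMono_pRep hE).range_inj ha).mp ((range_pRep hE).trans h.symm)

theorem Coarsens.exists_pRep_eq (h : Coarsens F E) (hF : (minReps F).Infinite)
    (hE : (minReps E).Infinite) (n : ℕ) : ∃ j ≥ n, pRep F n = pRep E j := by
  have hrange (k : ℕ) : pRep F k ∈ range (pRep E) :=
    (range_pRep hE).symm ▸ h.minReps_subset (pRep_mem hF k)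
  choose j hj using hrange
  have hmono : StrictMono j := fun k l hkl => by
    rw [← (strictMono_pRep hE).lt_iff_lt, hj, hj]
    exact strictMono_pRep hF hkl
  exact ⟨j n, hmono.le_apply, (hj n).symm⟩

/-- `G` and `F` assign the same minimal representative to each number up to `N`. With `N` the `n`-th
minimal representative of `F` this is equality of the `n`-th approximations. -/
def AgreeUpTo (N : ℕ) (G F : Setoid ℕ) : Prop := ∀ x ≤ N, rep G x = rep F x

theorem AgreeUpTo.symm {N : ℕ} (h : AgreeUpTo N G F) : AgreeUpTo N F G :=
  fun x hx => (h x hx).symm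

theorem AgreeUpTo.trans {N : ℕ} (hGF : AgreeUpTo N G F) (hFE : AgreeUpTo N F E) :
    AgreeUpTo N G E := fun x hx => (hGF x hx).trans (hFE x hx)

theorem AgreeUpTo.mono {M N : ℕ} (h : AgreeUpTo N G F) (hMN : M ≤ N) : AgreeUpTo M G F :=
  fun x hx => h x (hx.trans hMN)

theorem AgreeUpTo.pRep_eq {n k : ℕ} (h : AgreeUpTo (pRep F n) G F) (hF : (minReps F).Infinite)
    (hk : k ≤ n) : pRep G k = pRep F k := by
  classical
  have hle : pRep F k ≤ pRep F n := (strictMono_pRep hF).monotone hk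
  have hmem (x : ℕ) (hx : x ≤ pRep F k) : x ∈ minReps G ↔ x ∈ minReps F := by
    rw [mem_minReps_iff, mem_minReps_iff, h x (hx.trans hle)]
  have hcount : Nat.count (· ∈ minReps G) (pRep F k) = k := by
    refine Eq.trans ?_ (Nat.count_nth_of_infinite (p := (· ∈ minReps F)) hF k)
    rw [Nat.count_eq_card_filter_range, Nat.count_eq_card_filter_range]
    exact congrArg _ (Finset.filter_congr fun x hx => hmem x (Finset.mem_range.mp hx).le)
  have := Nat.nth_count ((hmem _ le_rfl).mpr (pRep_mem hF k))
  rwa [hcount] at this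

theorem Coarsens.agreeUpTo {n : ℕ} (hGE : Coarsens G E) (hFE : Coarsens F E)
    (hE : (minReps E).Infinite) (h : ∀ i ≤ n, rep G (pRep E i) = rep F (pRep E i)) :
    AgreeUpTo (pRep E n) G F := fun x hx => by
  obtain ⟨i, hi⟩ := (range_pRep hE).symm ▸ rep_mem_minReps E x
  have hin : i ≤ n := (strictMono_pRep hE).le_iff_le.mp (hi.trans_le ((rep_le E x).trans hx))
  rw [← coarsens_iff.mp hGE, ← coarsens_iff.mp hFE, ← hi, h i hin]

theorem agreeUpTo_of_approx_eq {m n : ℕ} (hG : (minReps G).Infinite) (hF : (minReps F).Infinite)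
    (h : approx m G = approx n F) : AgreeUpTo (pRep F n) G F ∧ pRep G m = pRep F n := by
  have hlt (x : ℕ) : x < pRep G m ↔ x < pRep F n := by
    have hdiag (k : ℕ) (E : Setoid ℕ) : (x, x) ∈ approx k E ↔ x < pRep E k :=
      ⟨fun hx => hx.1, fun hx => ⟨hx, hx, E.refl x⟩⟩
    rw [← hdiag, h, hdiag]
  have hp : pRep G m = pRep F n := eq_of_forall_lt_iff hlt
  refine ⟨fun x hx => ?_, hp⟩
  rcases hx.eq_or_lt with rfl | hx
  · rw [← hp, mem_minReps_iff.mp (pRep_mem hG m), hp, mem_minReps_iff.mp (pRep_mem hF n)]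
  · have hGx : (x, rep G x) ∈ approx m G :=
      ⟨(hlt x).mpr hx, (hlt _).mpr ((rep_le G x).trans_lt hx), rel_rep G x⟩
    have hFx : (x, rep F x) ∈ approx n F := ⟨hx, (rep_le F x).trans_lt hx, rel_rep F x⟩
    rw [h] at hGx
    rw [← h] at hFx
    exact le_antisymm (rep_le_of_rel hFx.2.2) (rep_le_of_rel hGx.2.2)

theorem approx_eq_iff {m n : ℕ} (hG : (minReps G).Infinite) (hF : (minReps F).Infinite) :
    approx m G = approx n F ↔ m = n ∧ AgreeUpTo (pRep F n) G F := by
  constructor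
  · intro h
    obtain ⟨hGF, hp⟩ := agreeUpTo_of_approx_eq hG hF h
    exact ⟨(strictMono_pRep hG).injective (hp.trans (hGF.pRep_eq hF le_rfl).symm), hGF⟩
  · rintro ⟨rfl, h⟩
    ext ⟨x, y⟩
    simp only [approx, mem_ofPred_eq, h.pRep_eq hF le_rfl, rel_iff_rep_eq]
    refine and_congr_right fun hx => and_congr_right fun hy => ?_
    rw [h x hx.le, h y hy.le]

end MinimalRepresentatives

section Alternating

variable {ι : Type*} {σ τ : ℕ → ι}

/-- The equivalence relations with infinitely many classes whose `k`-th minimal representative has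
label `σ k`. The labelling `τ` of ℕ encodes the partition into its fibres. -/
def alternating (σ τ : ℕ → ι) : Set (Setoid ℕ) :=
  {E | (classes E).Infinite ∧ ∀ k, τ (pRep E k) = σ k}

theorem infinite_minReps (E : alternating σ τ) : (minReps E.1).Infinite :=
  infinite_classes_iff.mp E.2.1

theorem mem_alternating {E : Setoid ℕ} {a : ℕ → ℕ} (ha : StrictMono a) (hE : range a = minReps E)
    (haσ : ∀ k, τ (a k) = σ k) : E ∈ alternating σ τ := by
  rw [← pRep_eq_of_range_eq ha hE] at haσ
  exact ⟨infinite_classes_iff.mpr (hE ▸ infinite_range_of_injective ha.injective), haσ⟩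

theorem exists_alternating_coarsens (E : alternating σ τ) {φ a : ℕ → ℕ}
    (hle : ∀ y ∈ minReps E.1, φ y ≤ y) (hmem : ∀ y ∈ minReps E.1, φ y ∈ minReps E.1)
    (hφ : ∀ y ∈ minReps E.1, φ (φ y) = φ y) (ha : StrictMono a)
    (hrange : ∀ y, y ∈ range a ↔ y ∈ minReps E.1 ∧ φ y = y) (haσ : ∀ k, τ (a k) = σ k) :
    ∃ A : alternating σ τ, Coarsens A.1 E.1 ∧ (∀ x, rep A.1 x = φ (rep E.1 x)) ∧ pRep A.1 = a := by
  obtain ⟨A, hAE, hA, hAfix⟩ := exists_coarsens_rep_eq hle hmem hφ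
  have hArange : range a = minReps A := (ext hrange).trans hAfix.symm
  exact ⟨⟨A, mem_alternating ha hArange haσ⟩, hAE, hA, pRep_eq_of_range_eq ha hArange⟩

theorem frequently_mem_minReps (hσ : IsToeplitz σ) (E : alternating σ τ) (k : ℕ) :
    ∃ᶠ x in Filter.atTop, x ∈ minReps E.1 ∧ τ x = σ k := by
  refine (strictMono_pRep (infinite_minReps E)).tendsto_atTop.frequently ?_
  exact (hσ.frequently_eq k).mono fun n hn =>
    ⟨pRep_mem (infinite_minReps E) n, (E.2.2 n).trans hn⟩

theorem exists_splice (hσ : IsToeplitz σ) (A G : alternating σ τ) (N : ℕ) :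
    ∃ a : ℕ → ℕ, StrictMono a ∧ (∀ x ≤ N, x ∈ range a ↔ x ∈ minReps A.1) ∧
      (∀ k, N < a k → a k ∈ minReps G.1) ∧ ∀ k, τ (a k) = σ k := by
  have hA := infinite_minReps A
  obtain ⟨n, hn⟩ : ∃ n, ∀ k, pRep A.1 k ≤ N ↔ k < n := by
    classical
    refine ⟨Nat.count (· ∈ minReps A.1) (N + 1), fun k => ?_⟩
    exact Nat.lt_succ_iff.symm.trans (Nat.lt_nth_iff_count_lt (p := (· ∈ minReps A.1)) hA).symm
  have hfreq (j : ℕ) : ∃ᶠ x in Filter.atTop, (x ∈ minReps G.1 ∧ τ x = σ (n + j)) ∧ N < x :=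
    (frequently_mem_minReps hσ G (n + j)).and_eventually (Filter.eventually_gt_atTop N)
  obtain ⟨b, hb, hbP⟩ := Filter.extraction_forall_of_frequently hfreq
  let a (k : ℕ) : ℕ := if k < n then pRep A.1 k else b (k - n)
  have ha_lt {k : ℕ} (hk : k < n) : a k = pRep A.1 k := if_pos hk
  have ha_ge {k : ℕ} (hk : n ≤ k) : a k = b (k - n) := if_neg hk.not_gt
  refine ⟨a, fun k l hkl => ?_, fun x hx => ⟨?_, fun hxA => ?_⟩, fun k hk => ?_, fun k => ?_⟩
  · rcases lt_or_ge l n with hl | hl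
    · rw [ha_lt hl, ha_lt (hkl.trans hl)]
      exact strictMono_pRep hA hkl
    rcases lt_or_ge k n with hk | hk
    · rw [ha_lt hk, ha_ge hl]
      exact ((hn k).mpr hk).trans_lt (hbP _).2
    · rw [ha_ge hl, ha_ge hk]
      exact hb (by omega)
  · rintro ⟨k, rfl⟩
    rcases lt_or_ge k n with hk | hk
    · exact ha_lt hk ▸ pRep_mem hA k
    · exact absurd (ha_ge hk ▸ (hbP _).2) hx.not_gt
  · obtain ⟨k, rfl⟩ := (range_pRep hA).symm ▸ hxA
    exact ⟨k, ha_lt ((hn k).mp hx)⟩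
  · rcases lt_or_ge k n with h | h
    · exact absurd ((hn k).mpr h) (ha_lt h ▸ hk).not_ge
    · exact ha_ge h ▸ (hbP _).1.1
  · rcases lt_or_ge k n with h | h
    · rw [ha_lt h, A.2.2]
    · rw [ha_ge h, (hbP _).1.2, Nat.add_sub_cancel' h]

theorem exists_merging_retraction (H : Setoid ℕ) {N : ℕ} {T : Set ℕ}
    (hT : ∀ y ∈ T, N < y → y ∈ minReps H) :
    ∃ φ : ℕ → ℕ, (∀ y ≤ N, φ y = y) ∧ (∀ y, φ y ≤ y) ∧ (∀ y, φ (φ y) = φ y) ∧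
      (∀ y, N < y → (φ y = y ↔ y ∈ T)) ∧
      ∀ y, N < y → φ y = rep H y ∨ φ y = 0 ∧ φ (rep H y) = 0 := by
  classical
  let φ (y : ℕ) : ℕ := if y ≤ N then y else if rep H y ≤ N ∨ rep H y ∈ T then rep H y else 0
  have hlow {y : ℕ} (hy : y ≤ N) : φ y = y := if_pos hy
  have hhigh {y : ℕ} (hy : N < y) : φ y = if rep H y ≤ N ∨ rep H y ∈ T then rep H y else 0 :=
    if_neg hy.not_ge
  have hfix {y : ℕ} (hy : N < y) : φ y = y ↔ y ∈ T := by
    rw [hhigh hy]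
    refine ⟨fun h => ?_, fun h => ?_⟩
    · split_ifs at h with hH
      · rw [h] at hH
        exact hH.resolve_left hy.not_ge
      · omega
    · rw [mem_minReps_iff.mp (hT y h hy), if_pos (.inr h)]
  have hcases {y : ℕ} (hy : N < y) : φ y = rep H y ∧ (rep H y ≤ N ∨ rep H y ∈ T) ∨
      φ y = 0 ∧ φ (rep H y) = 0 := by
    by_cases hH : rep H y ≤ N ∨ rep H y ∈ T
    · exact .inl ⟨by rw [hhigh hy, if_pos hH], hH⟩
    · have hHN : N < rep H y := by by_contra! h; exact hH (.inl h)
      exact .inr ⟨by rw [hhigh hy, if_neg hH], by rw [hhigh hHN, rep_rep, if_neg hH]⟩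
  refine ⟨φ, fun y => hlow, fun y => ?_, fun y => ?_, fun y => hfix, fun y hy =>
    (hcases hy).imp_left And.left⟩
  · rcases le_or_gt y N with hy | hy
    · exact (hlow hy).le
    · rcases hcases hy with ⟨h, -⟩ | ⟨h, -⟩ <;> rw [h]
      exacts [rep_le H y, y.zero_le]
  · rcases le_or_gt y N with hy | hy
    · rw [hlow hy, hlow hy]
    rcases hcases hy with ⟨h, hH⟩ | ⟨h, -⟩ <;> rw [h]
    · rcases le_or_gt (rep H y) N with hN | hN
      exacts [hlow hN, (hfix hN).mpr (hH.resolve_left hN.not_ge)]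
    · exact hlow N.zero_le

/-- Amalgamation: beyond `N` the minimal representatives of `A'` are taken from `H`, and the classes
of `H` that are not used are merged with the class of `0`. -/
theorem exists_coarsens_amalgam (hσ : IsToeplitz σ) {H A : alternating σ τ} (hHA : Coarsens H.1 A.1)
    (N : ℕ) : ∃ A' : alternating σ τ, Coarsens A'.1 A.1 ∧ AgreeUpTo N A'.1 A.1 ∧
      ∀ K, Coarsens K A'.1 → AgreeUpTo N K H.1 → Coarsens K H.1 := by
  obtain ⟨a, ha, haA, haH, haσ⟩ := exists_splice hσ A H N
  obtain ⟨φ, hlow, hle, hφ, hfix, hhigh⟩ := exists_merging_retraction H.1 (T := range a)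
    (by rintro _ ⟨k, rfl⟩ hk; exact haH k hk)
  have hmem (y : ℕ) (hy : y ∈ minReps A.1) : φ y ∈ minReps A.1 := by
    rcases le_or_gt y N with hN | hN
    · rwa [hlow y hN]
    rcases hhigh y hN with h | ⟨h, -⟩ <;> rw [h]
    exacts [hHA.minReps_subset (rep_mem_minReps _ y), mem_minReps_iff.mpr (rep_zero _)]
  have hrange (y : ℕ) : y ∈ range a ↔ y ∈ minReps A.1 ∧ φ y = y := by
    rcases le_or_gt y N with hN | hN
    · rw [haA y hN, hlow y hN, and_iff_left rfl]
    refine ⟨fun h => ⟨?_, (hfix y hN).mpr h⟩, fun h => (hfix y hN).mp h.2⟩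
    obtain ⟨k, rfl⟩ := h
    exact hHA.minReps_subset (haH k hN)
  obtain ⟨A', hA'A, hA', -⟩ := exists_alternating_coarsens A (fun y _ => hle y) hmem
    (fun y _ => hφ y) ha hrange haσ
  refine ⟨A', hA'A, fun x hx => by rw [hA', hlow _ ((rep_le _ x).trans hx)], fun K hKA' hKH => ?_⟩
  rw [coarsens_iff] at hHA hKA' ⊢
  have hK (x : ℕ) : rep K (φ (rep A.1 x)) = rep K x := by rw [← hA', hKA']
  intro x
  rw [← hK x, ← hHA x]
  generalize rep A.1 x = y at *
  rcases le_or_gt y N with hN | hN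
  · rw [hlow y hN, hKH y hN, hKH _ ((rep_le _ _).trans hN), rep_rep]
  rcases hhigh y hN with h | ⟨h, h'⟩
  · rw [h]
  · have hAH : rep A.1 (rep H.1 y) = rep H.1 y := by
      rw [← mem_minReps_iff]
      exact Coarsens.minReps_subset (coarsens_iff.mpr hHA) (rep_mem_minReps _ y)
    rw [h, ← hK (rep H.1 y), hAH, h']

/-- The basic set of all coarsenings of `A` with the same `n`-th approximation as `F`. -/
noncomputable abbrev cone (n : ℕ) (F A : alternating σ τ) : Set (alternating σ τ) :=
  basicSet _ (approx n F.1) A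

variable {n : ℕ} {F A B G : alternating σ τ}

theorem mem_cone : G ∈ cone n F A ↔ Coarsens G.1 A.1 ∧ AgreeUpTo (pRep F.1 n) G.1 F.1 := by
  simp only [cone, basicSet, mem_ofPred_eq,
    approx_eq_iff (infinite_minReps G) (infinite_minReps F), exists_eq_left]

theorem self_mem_cone (h : Coarsens F.1 A.1) : F ∈ cone n F A := ⟨h, n, rfl⟩

theorem cone_congr (h : G ∈ cone n F B) : cone n G A = cone n F A := by
  obtain ⟨-, h⟩ := mem_cone.mp h
  rw [cone, (approx_eq_iff (infinite_minReps G) (infinite_minReps F)).mpr ⟨rfl, h⟩]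

theorem cone_subset (h : Coarsens A.1 B.1) : cone n F A ⊆ cone n F B :=
  fun _ hG => ⟨hG.1.trans h, hG.2⟩

theorem cone_self_subset (hG : G ∈ cone n F A) : cone n G G ⊆ cone n F A :=
  (cone_subset hG.1).trans (cone_congr hG).subset

theorem cone_antitone : Antitone fun n => cone n F A := fun m n hmn G hG => by
  rw [mem_cone] at hG ⊢
  exact ⟨hG.1, hG.2.mono ((strictMono_pRep (infinite_minReps F)).monotone hmn)⟩

theorem mem_cone_self_iff :
    G ∈ cone n F F ↔ Coarsens G.1 F.1 ∧ ∀ i ≤ n, pRep F.1 i ∈ minReps G.1 := by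
  have hF := infinite_minReps F
  rw [mem_cone]
  refine and_congr_right fun hGF => ⟨fun h i hi => ?_, fun h => ?_⟩
  · exact h.pRep_eq hF hi ▸ pRep_mem (infinite_minReps G) i
  · refine hGF.agreeUpTo (Coarsens.refl _) hF fun i hi => ?_
    rw [mem_minReps_iff.mp (h i hi), mem_minReps_iff.mp (pRep_mem hF i)]

theorem cone_trans (hA : A ∈ cone n F F) (hG : G ∈ cone n A A) : G ∈ cone n F F :=
  cone_self_subset hA hG

theorem exists_fusion {A : ℕ → alternating σ τ} {n : ℕ}
    (hA : ∀ k, A (k + 1) ∈ cone (n + k) (A k) (A k)) :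
    ∃ C : alternating σ τ, ∀ k, C ∈ cone (n + k) (A k) (A k) := by
  have hcone {j k : ℕ} (hjk : j ≤ k) : A k ∈ cone (n + j) (A j) (A j) := by
    induction k, hjk using Nat.le_induction with
    | base => exact self_mem_cone (Coarsens.refl _)
    | succ k hjk ih =>
      exact cone_self_subset ih (cone_antitone (Nat.add_le_add_left hjk n) (hA k))
  have hle (k i : ℕ) (hik : i ≤ n + k) : i ≤ pRep (A k).1 (n + k) :=
    hik.trans (strictMono_pRep (infinite_minReps (A k))).le_apply
  have hstable {x k : ℕ} (hxk : x ≤ k) : rep (A k).1 x = rep (A x).1 x :=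
    (mem_cone.mp (hcone hxk)).2 x (hle x x (by omega))
  let C := Setoid.ker fun x => rep (A x).1 x
  have hC {x k : ℕ} (hxk : x ≤ k) : rep C x = rep (A k).1 x := by
    rw [hstable hxk]
    refine rep_ker (fun x => rep_le _ x) (fun x => ?_) x
    rw [← hstable (rep_le _ x), rep_rep]
  have hCA (k : ℕ) : Coarsens C (A k).1 ∧ AgreeUpTo (pRep (A k).1 (n + k)) C (A k).1 := by
    refine ⟨coarsens_iff.mpr fun x => ?_, fun x hx => ?_⟩
    · rw [hC ((rep_le _ x).trans (le_max_right k x)), hC (le_max_right k x)]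
      exact coarsens_iff.mp (hcone (le_max_left k x)).1 x
    · rw [hC (le_max_right k x)]
      exact (mem_cone.mp (hcone (le_max_left k x))).2 x hx
  have hpRep (k : ℕ) : pRep C k = pRep (A k).1 k :=
    (hCA k).2.pRep_eq (infinite_minReps _) (by omega)
  have hCinf : (minReps C).Infinite := by
    refine infinite_of_forall_exists_gt fun k =>
      ⟨pRep (A (k + 1)).1 (n + (k + 1)), ?_, hle (k + 1) (k + 1) (by omega)⟩
    rw [mem_minReps_iff, (hCA (k + 1)).2 _ le_rfl, ← mem_minReps_iff]
    exact pRep_mem (infinite_minReps _) _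
  have hCalt : C ∈ alternating σ τ :=
    ⟨infinite_classes_iff.mpr hCinf, fun k => by rw [hpRep, (A k).2.2]⟩
  exact ⟨⟨C, hCalt⟩, fun k => mem_cone.mpr (hCA k)⟩

end Alternating

section Pigeonhole

variable {ι : Type*} {σ τ : ℕ → ι}

theorem exists_coarsens_of_index_retraction (F : alternating σ τ) {ψ b : ℕ → ℕ}
    (hle : ∀ i, ψ i ≤ i) (hψ : ∀ i, ψ (ψ i) = ψ i) (hb : StrictMono b)
    (hrange : ∀ i, i ∈ range b ↔ ψ i = i) (hbσ : ∀ k, σ (b k) = σ k) :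
    ∃ A : alternating σ τ, Coarsens A.1 F.1 ∧ (∀ i, rep A.1 (pRep F.1 i) = pRep F.1 (ψ i)) ∧
      ∀ k, pRep A.1 k = pRep F.1 (b k) := by
  have hF := infinite_minReps F
  have hmono := strictMono_pRep hF
  let φ (y : ℕ) : ℕ := pRep F.1 (ψ (Function.invFun (pRep F.1) y))
  have hφ (i : ℕ) : φ (pRep F.1 i) = pRep F.1 (ψ i) :=
    congrArg (fun j => pRep F.1 (ψ j)) (Function.leftInverse_invFun hmono.injective i)
  have hidem (i : ℕ) : φ (φ (pRep F.1 i)) = φ (pRep F.1 i) := by rw [hφ i, hφ, hψ]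
  have hpRep {p : ℕ → Prop} (h : ∀ i, p (pRep F.1 i)) (y : ℕ) (hy : y ∈ minReps F.1) : p y := by
    obtain ⟨i, rfl⟩ := (range_pRep hF).symm ▸ hy
    exact h i
  have hrange' (y : ℕ) : y ∈ range (pRep F.1 ∘ b) ↔ y ∈ minReps F.1 ∧ φ y = y := by
    constructor
    · rintro ⟨k, rfl⟩
      exact ⟨pRep_mem hF _, (hφ _).trans (congrArg _ ((hrange _).mp ⟨k, rfl⟩))⟩
    · rintro ⟨hy, hfix⟩
      obtain ⟨i, rfl⟩ := (range_pRep hF).symm ▸ hy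
      rw [hφ] at hfix
      obtain ⟨k, rfl⟩ := (hrange i).mpr (hmono.injective hfix)
      exact ⟨k, rfl⟩
  obtain ⟨A, hAF, hA, hAb⟩ := exists_alternating_coarsens F (φ := φ)
    (hpRep fun i => (hφ i).trans_le (hmono.monotone (hle i)))
    (hpRep fun i => hφ i ▸ pRep_mem hF _) (hpRep hidem) (hmono.comp hb) hrange'
    (fun k => (F.2.2 _).trans (hbσ k))
  refine ⟨A, hAF, fun i => ?_, congrFun hAb⟩
  rw [hA, mem_minReps_iff.mp (pRep_mem hF i), hφ]

/-- The function that is the identity up to `n` and is `f`, shifted, beyond `n`. -/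
def extendId (n : ℕ) (f : ℕ → ℕ) (i : ℕ) : ℕ := if i ≤ n then i else f (i - (n + 1))

theorem extendId_of_le {n i : ℕ} (f : ℕ → ℕ) (hi : i ≤ n) : extendId n f i = i := if_pos hi

theorem extendId_add (n : ℕ) (f : ℕ → ℕ) (i : ℕ) : extendId n f (n + 1 + i) = f i := by
  rw [extendId, if_neg (by omega), Nat.add_sub_cancel_left]

theorem forall_of_le_of_add {p : ℕ → Prop} (n : ℕ) (hle : ∀ i ≤ n, p i)
    (hadd : ∀ i, p (n + 1 + i)) (i : ℕ) : p i := by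
  rcases le_or_gt i n with hi | hi
  exacts [hle i hi, Nat.add_sub_cancel' hi ▸ hadd (i - (n + 1))]

theorem strictMono_extendId {n : ℕ} {f : ℕ → ℕ} (hf : StrictMono f) (hn : n < f 0) :
    StrictMono (extendId n f) := by
  refine strictMono_nat_of_lt_succ (forall_of_le_of_add n (fun i hi => ?_) fun i => ?_)
  · rw [extendId_of_le f hi]
    rcases hi.eq_or_lt with rfl | hi
    · exact (extendId_add i f 0).symm ▸ hn
    · exact (extendId_of_le f hi).symm ▸ i.lt_succ_self
  · rw [extendId_add, add_assoc, extendId_add]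
    exact hf i.lt_succ_self

/-- The index of the minimal representative that an entry of a variable word refers to. Letters
refer to the first `n + 1` minimal representatives, and the variable `k`, whose first occurrence is
at `v k`, refers to the one with index `n + 1 + v k`. -/
def entryIndex {n : ℕ} (v : ℕ → ℕ) : Fin (n + 1) ⊕ ℕ → ℕ := Sum.elim Fin.val fun k => n + 1 + v k

theorem IsVariableWord.entryIndex_first {n : ℕ} {W : ℕ → Fin (n + 1) ⊕ ℕ} {v : ℕ → ℕ}
    (hW : IsVariableWord W v) (k : ℕ) : entryIndex v (W (v k)) = n + 1 + v k :=
  congrArg _ (hW.apply_eq k)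

theorem IsVariableWord.entryIndex_cases {n : ℕ} {W : ℕ → Fin (n + 1) ⊕ ℕ} {v : ℕ → ℕ}
    (hW : IsVariableWord W v) (i : ℕ) :
    entryIndex v (W i) ≤ n ∨ ∃ k, entryIndex v (W i) = n + 1 + v k ∧ v k ≤ i := by
  rcases h : W i with l | k
  · exact .inl l.is_le
  · exact .inr ⟨k, rfl, hW.le_of_apply_eq h⟩

theorem IsVariableWord.mem_range_extendId_iff {n : ℕ} {W : ℕ → Fin (n + 1) ⊕ ℕ} {v : ℕ → ℕ}
    (hW : IsVariableWord W v) (i : ℕ) :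
    n + 1 + i ∈ range (extendId n fun k => n + 1 + v k) ↔ entryIndex v (W i) = n + 1 + i := by
  refine ⟨fun ⟨j, hj⟩ => ?_, fun h => ?_⟩
  · induction j using forall_of_le_of_add n with
    | hle j hjn => exact absurd (extendId_of_le _ hjn ▸ hj) (by omega)
    | hadd k =>
      rw [extendId_add] at hj
      exact Nat.add_left_cancel hj ▸ hW.entryIndex_first k
  · obtain ⟨k, hk, -⟩ := (hW.entryIndex_cases i).resolve_left (by omega)
    exact ⟨n + 1 + k, (extendId_add n _ k).trans (hk.symm.trans h)⟩

theorem IsVariableWord.exists_mem_cone {n : ℕ} {W : ℕ → Fin (n + 1) ⊕ ℕ} {v : ℕ → ℕ}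
    (hW : IsVariableWord W v) (hv : ∀ k, σ (n + 1 + v k) = σ (n + 1 + k)) (F : alternating σ τ) :
    ∃ A ∈ cone n F F, (∀ k, pRep A.1 (n + 1 + k) = pRep F.1 (n + 1 + v k)) ∧
      ∀ i, rep A.1 (pRep F.1 (n + 1 + i)) = pRep F.1 (entryIndex v (W i)) := by
  let b (k : ℕ) : ℕ := n + 1 + v k
  let w (i : ℕ) : ℕ := entryIndex v (W i)
  have hle (i : ℕ) : w i ≤ n + 1 + i := by
    rcases hW.entryIndex_cases i with h | ⟨k, h, hk⟩
    · exact h.trans (by omega)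
    · exact h.trans_le (Nat.add_le_add_left hk _)
  have hidem (i : ℕ) : extendId n w (w i) = w i := by
    rcases hW.entryIndex_cases i with h | ⟨k, h, -⟩
    · exact extendId_of_le w h
    · rw [show w i = n + 1 + v k from h, extendId_add]
      exact hW.entryIndex_first k
  have hmono : StrictMono (extendId n b) :=
    strictMono_extendId (hW.strictMono.const_add _) (Nat.le_add_right (n + 1) (v 0))
  obtain ⟨A, hAF, hA, hAb⟩ := exists_coarsens_of_index_retraction F (ψ := extendId n w)
    (forall_of_le_of_add n (fun i hi => (extendId_of_le w hi).le)
      fun i => (extendId_add n w i).trans_le (hle i))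
    (forall_of_le_of_add n (fun i hi => by rw [extendId_of_le w hi, extendId_of_le w hi])
      fun i => by rw [extendId_add, hidem]) hmono
    (forall_of_le_of_add n
      (fun i hi => ⟨fun _ => extendId_of_le w hi, fun _ => ⟨i, extendId_of_le b hi⟩⟩)
      fun i => by rw [extendId_add, hW.mem_range_extendId_iff])
    (forall_of_le_of_add n (fun i hi => by rw [extendId_of_le b hi])
      fun i => by rw [extendId_add, hv])
  refine ⟨A, mem_cone_self_iff.mpr ⟨hAF, fun i hi => ?_⟩, fun k => ?_, fun i => ?_⟩
  · rw [mem_minReps_iff, hA, extendId_of_le w hi]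
  · rw [hAb, extendId_add]
  · rw [hA, extendId_add]

/-- `G` is a member of `cone n F F` whose `(n + 1)`-th approximation is encoded by the word `x`: its
next minimal representative after those of `F` up to `n` is the one of index `n + 1 + |x|`, and the
letters of `x` name the classes that `G` assigns to the minimal representatives of `F` in
between. -/
structure Codes (F : alternating σ τ) (n : ℕ) (x : List (Fin (n + 1))) (G : alternating σ τ) :
    Prop where
  mem_cone : G ∈ cone n F F
  pRep_succ : pRep G.1 (n + 1) = pRep F.1 (n + 1 + x.length)
  rep_getElem : ∀ i (hi : i < x.length), rep G.1 (pRep F.1 (n + 1 + i)) = pRep F.1 x[i]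

theorem Codes.approx_eq {F G H : alternating σ τ} {n : ℕ} {x : List (Fin (n + 1))}
    (hG : Codes F n x G) (hH : Codes F n x H) : approx (n + 1) G.1 = approx (n + 1) H.1 := by
  rw [approx_eq_iff (infinite_minReps G) (infinite_minReps H), hH.pRep_succ]
  refine ⟨rfl, hG.mem_cone.1.agreeUpTo hH.mem_cone.1 (infinite_minReps F)
    (forall_of_le_of_add n (fun i hi _ => ?_) fun i hi => ?_)⟩
  · have hle := (strictMono_pRep (infinite_minReps F)).monotone hi
    rw [(DualRamsey.mem_cone.mp hG.mem_cone).2 _ hle, (DualRamsey.mem_cone.mp hH.mem_cone).2 _ hle]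
  · rcases (Nat.le_of_add_le_add_left hi).eq_or_lt with rfl | hi
    · conv_lhs => rw [← hG.pRep_succ, mem_minReps_iff.mp (pRep_mem (infinite_minReps G) _)]
      conv_rhs => rw [← hH.pRep_succ, mem_minReps_iff.mp (pRep_mem (infinite_minReps H) _)]
      rw [hG.pRep_succ, hH.pRep_succ]
    · rw [hG.rep_getElem i hi, hH.rep_getElem i hi]

theorem exists_rep_eq_of_lt_pRep_succ {F G : alternating σ τ} {n x : ℕ} (hG : G ∈ cone n F F)
    (hx : x < pRep G.1 (n + 1)) : ∃ l : Fin (n + 1), rep G.1 x = pRep F.1 l := by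
  have hGinf := infinite_minReps G
  obtain ⟨l, hl⟩ := (range_pRep hGinf).symm ▸ rep_mem_minReps G.1 x
  have hln : l < n + 1 :=
    (strictMono_pRep hGinf).lt_iff_lt.mp (hl.trans_lt ((rep_le _ x).trans_lt hx))
  refine ⟨⟨l, hln⟩, hl.symm.trans ?_⟩
  exact (mem_cone.mp hG).2.pRep_eq (infinite_minReps F) (Nat.le_of_lt_succ hln)

theorem IsVariableWord.exists_codes {n : ℕ} {W : ℕ → Fin (n + 1) ⊕ ℕ} {v : ℕ → ℕ}
    (hW : IsVariableWord W v) {F A G : alternating σ τ} (hAF : A ∈ cone n F F)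
    (hAv : ∀ k, pRep A.1 (n + 1 + k) = pRep F.1 (n + 1 + v k))
    (hA : ∀ i, rep A.1 (pRep F.1 (n + 1 + i)) = pRep F.1 (entryIndex v (W i)))
    (hG : G ∈ cone n A A) :
    ∃ k α, σ (n + 1 + k) = σ (n + 1) ∧
      Codes F n (instantiate α ((List.range (v k)).map W)) G := by
  have hGF := cone_trans hAF hG
  have hF := infinite_minReps F
  obtain ⟨k, hk⟩ : ∃ k, pRep G.1 (n + 1) = pRep A.1 (n + 1 + k) := by
    obtain ⟨j, hj, h⟩ := hG.1.exists_pRep_eq (infinite_minReps G) (infinite_minReps A) (n + 1)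
    exact ⟨j - (n + 1), by rwa [Nat.add_sub_cancel' hj]⟩
  have hkF := hk.trans (hAv k)
  have hlt {i : ℕ} (hi : i < v k) : pRep F.1 (n + 1 + i) < pRep G.1 (n + 1) :=
    hkF ▸ strictMono_pRep hF (Nat.add_lt_add_left hi _)
  have hletter (m : ℕ) : ∃ l : Fin (n + 1), m < k →
      rep G.1 (pRep F.1 (n + 1 + v m)) = pRep F.1 l := by
    by_cases hm : m < k
    · obtain ⟨l, hl⟩ := exists_rep_eq_of_lt_pRep_succ hGF (hlt (hW.strictMono hm))
      exact ⟨l, fun _ => hl⟩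
    · exact ⟨0, fun h => absurd h hm⟩
  choose α hα using hletter
  refine ⟨k, α, ?_, hGF, by simpa [instantiate] using hkF, fun i hi => ?_⟩
  · rw [← A.2.2, ← hk, G.2.2]
  have hiv : i < v k := by simpa [instantiate] using hi
  have hx : (instantiate α ((List.range (v k)).map W))[i] = (W i).elim id α := by
    simp [instantiate]
  rw [hx, ← coarsens_iff.mp hG.1, hA]
  rcases h : W i with l | m
  · have := mem_cone_self_iff.mp hGF
    exact mem_minReps_iff.mp (this.2 l l.is_le)
  · exact hα m (hW.strictMono.lt_iff_lt.mp ((hW.le_of_apply_eq h).trans_lt hiv))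

theorem exists_homogeneous_cone (hσ : IsToeplitz σ) (n : ℕ) (F : alternating σ τ)
    (O : Set (ℕ × ℕ) → Prop) :
    ∃ A ∈ cone n F F, (∀ G ∈ cone n A A, O (approx (n + 1) G.1)) ∨
      ∀ G ∈ cone n A A, ¬ O (approx (n + 1) G.1) := by
  let C (x : List (Fin (n + 1))) : Prop := ∃ G, Codes F n x G ∧ O (approx (n + 1) G.1)
  obtain ⟨W, v, h⟩ := (hσ.comp_add_left (n + 1)).exists_isHomogeneousFor C
  obtain ⟨hW, hv⟩ : IsVariableWord W v ∧ ∀ k, σ (n + 1 + v k) = σ (n + 1 + k) :=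
    h.elim (fun h => ⟨h.1, h.2.1⟩) fun h => ⟨h.1, h.2.1⟩
  obtain ⟨A, hAF, hAv, hA⟩ := hW.exists_mem_cone hv F
  refine ⟨A, hAF, h.imp (fun h G hG => ?_) fun h G hG hO => ?_⟩
  all_goals obtain ⟨k, α, hk, hGx⟩ := hW.exists_codes hAF hAv hA hG
  · obtain ⟨H, hH, hO⟩ := h.2.2 k hk α
    rwa [hGx.approx_eq hH]
  · exact h.2.2 k hk α ⟨G, hGx, hO⟩

end Pigeonhole

section Diagonalization

variable {ι : Type*} {σ τ : ℕ → ι} {Q : ℕ → Set (alternating σ τ) → Prop} {n₀ : ℕ}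
  {A B : alternating σ τ}

theorem exists_coarsens_forall_mem (hσ : IsToeplitz σ) (hQ : ∀ n, Antitone (Q n))
    (hd : ∀ n ≥ n₀, ∀ F, Coarsens F.1 B.1 → ∃ G ∈ cone n F F, Q n (cone n G G))
    (hAB : Coarsens A.1 B.1) (N : ℕ) {S : Set (Set (ℕ × ℕ))} (hS : S.Finite) :
    ∃ A' : alternating σ τ, Coarsens A'.1 A.1 ∧ AgreeUpTo N A'.1 A.1 ∧
      ∀ n ≥ n₀, ∀ F : alternating σ τ, Coarsens F.1 A'.1 → pRep F.1 n = N →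
        approx n F.1 ∈ S → Q n (cone n F A') := by
  induction S, hS using Set.Finite.induction_on with
  | empty =>
    exact ⟨A, Coarsens.refl _, fun _ _ => rfl, fun _ _ _ _ _ h => absurd h (notMem_empty _)⟩
  | @insert s S _ _ ih =>
    obtain ⟨A₁, hA₁A, hA₁N, hA₁⟩ := ih
    by_cases hs : ∃ n ≥ n₀, ∃ F : alternating σ τ, Coarsens F.1 A₁.1 ∧ pRep F.1 n = N ∧
      approx n F.1 = s
    · obtain ⟨n, hn, F₀, hF₀A₁, rfl, rfl⟩ := hs
      obtain ⟨G, hG, hGQ⟩ := hd n hn F₀ (hF₀A₁.trans (hA₁A.trans hAB))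
      rw [mem_cone] at hG
      obtain ⟨A', hA'A₁, hA'N, hA'⟩ := exists_coarsens_amalgam hσ (hG.1.trans hF₀A₁) (pRep F₀.1 n)
      refine ⟨A', hA'A₁.trans hA₁A, hA'N.trans hA₁N, fun m hm F hF hFm hFS => ?_⟩
      rcases hFS with hFs | hFS
      · obtain ⟨rfl, hFF₀⟩ := (approx_eq_iff (infinite_minReps F) (infinite_minReps F₀)).mp hFs
        refine hQ m (fun K hK => ?_) hGQ
        rw [mem_cone, hG.2.pRep_eq (infinite_minReps F₀) le_rfl]
        rw [mem_cone, hFm] at hK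
        have hKG := (hK.2.trans hFF₀).trans hG.2.symm
        exact ⟨hA' K hK.1 hKG, hKG⟩
      · exact hQ m (cone_subset hA'A₁) (hA₁ m hm F (hF.trans hA'A₁) hFm hFS)
    · refine ⟨A₁, hA₁A, hA₁N, fun m hm F hF hFm hFS => hA₁ m hm F hF hFm (hFS.resolve_left ?_)⟩
      exact fun hFs => hs ⟨m, hm, F, hF, hFm, hFs⟩

theorem exists_coarsens_forall_pRep_eq (hσ : IsToeplitz σ) (hQ : ∀ n, Antitone (Q n))
    (hd : ∀ n ≥ n₀, ∀ F, Coarsens F.1 B.1 → ∃ G ∈ cone n F F, Q n (cone n G G))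
    (hAB : Coarsens A.1 B.1) (N : ℕ) :
    ∃ A' : alternating σ τ, Coarsens A'.1 A.1 ∧ AgreeUpTo N A'.1 A.1 ∧
      ∀ n ≥ n₀, ∀ F : alternating σ τ, Coarsens F.1 A'.1 → pRep F.1 n = N →
        Q n (cone n F A') := by
  obtain ⟨A', hA'A, hA'N, hA'⟩ := exists_coarsens_forall_mem hσ hQ hd hAB N
    ((finite_Iio N).prod (finite_Iio N)).powerset
  refine ⟨A', hA'A, hA'N, fun n hn F hF hFn => hA' n hn F hF hFn ?_⟩
  exact fun q hq => ⟨hq.1.trans_eq hFn, hq.2.1.trans_eq hFn⟩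

theorem exists_diagonal (hσ : IsToeplitz σ) (hQ : ∀ n, Antitone (Q n))
    (hd : ∀ n ≥ n₀, ∀ F, Coarsens F.1 B.1 → ∃ G ∈ cone n F F, Q n (cone n G G)) :
    ∃ C ∈ cone n₀ B B, ∀ n ≥ n₀, ∀ F, Coarsens F.1 C.1 → Q n (cone n F C) := by
  choose! next hnext hagree hnextQ using fun (A : alternating σ τ) (hAB : Coarsens A.1 B.1) =>
    exists_coarsens_forall_pRep_eq hσ hQ hd hAB
  let A (k : ℕ) : alternating σ τ := Nat.rec B (fun k A => next A (pRep A.1 (n₀ + k))) k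
  have hAB (k : ℕ) : Coarsens (A k).1 B.1 := by
    induction k with
    | zero => exact Coarsens.refl _
    | succ k ih => exact (hnext (A k) ih _).trans ih
  have hA (k : ℕ) : A (k + 1) ∈ cone (n₀ + k) (A k) (A k) :=
    mem_cone.mpr ⟨hnext _ (hAB k) _, hagree _ (hAB k) _⟩
  obtain ⟨C, hC⟩ := exists_fusion hA
  refine ⟨C, hC 0, fun n hn F hF => ?_⟩
  obtain ⟨j, hj, hFj⟩ := hF.exists_pRep_eq (infinite_minReps F) (infinite_minReps C) n
  obtain ⟨k, rfl⟩ := Nat.exists_eq_add_of_le (hn.trans hj)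
  have hCk : pRep C.1 (n₀ + k) = pRep (A k).1 (n₀ + k) :=
    (mem_cone.mp (hC k)).2.pRep_eq (infinite_minReps _) le_rfl
  have hCA : Coarsens C.1 (A (k + 1)).1 := (hC (k + 1)).1
  exact hQ n (cone_subset hCA) (hnextQ _ (hAB k) _ n hn F (hF.trans hCA) (hFj.trans hCk))

end Diagonalization

section Ellentuck

variable {ι : Type*} {σ τ : ℕ → ι} {X U : Set (alternating σ τ)} {n : ℕ} {F : alternating σ τ}

theorem exists_mem_basicSet_iff {p : Set (alternating σ τ) → Prop} :
    (∀ a B, (basicSet (alternating σ τ) a B).Nonempty →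
      ∃ A ∈ basicSet (alternating σ τ) a B, p (basicSet _ a A)) ↔
    ∀ n F, ∃ A ∈ cone n F F, p (cone n A A) := by
  refine ⟨fun h n F => ?_, fun h a B => ?_⟩
  · obtain ⟨A, hA, hpA⟩ := h (approx n F.1) F ⟨F, self_mem_cone (Coarsens.refl _)⟩
    exact ⟨A, hA, cone_congr hA ▸ hpA⟩
  · rintro ⟨F, hFB, n, rfl⟩
    obtain ⟨A, hA, hpA⟩ := h n F
    exact ⟨A, cone_subset hFB hA, (cone_congr hA).subst hpA⟩

theorem isRamsey_iff : IsRamsey (alternating σ τ) X ↔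
    ∀ n F, ∃ A ∈ cone n F F, cone n A A ⊆ X ∨ Disjoint (cone n A A) X := by
  simp only [disjoint_iff_inter_eq_empty]
  exact exists_mem_basicSet_iff (p := fun s => s ⊆ X ∨ s ∩ X = ∅)

theorem isRamseyNull_iff : IsRamseyNull (alternating σ τ) X ↔
    ∀ n F, ∃ A ∈ cone n F F, Disjoint (cone n A A) X := by
  simp only [disjoint_iff_inter_eq_empty]
  exact exists_mem_basicSet_iff (p := fun s => s ∩ X = ∅)

attribute [local instance] ellentuckTop

theorem isOpen_cone (n : ℕ) (F A : alternating σ τ) : IsOpen (cone n F A) :=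
  .basic _ ⟨_, _, rfl⟩

theorem exists_cone_subset_of_isOpen (hU : IsOpen U) (hF : F ∈ U) : ∃ n, cone n F F ⊆ U := by
  induction hU with
  | basic s hs =>
    obtain ⟨a, E, rfl⟩ := hs
    obtain ⟨hFE, n, rfl⟩ := hF
    exact ⟨n, cone_subset hFE⟩
  | univ => exact ⟨0, subset_univ _⟩
  | inter s t _ _ ihs iht =>
    obtain ⟨m, hm⟩ := ihs hF.1
    obtain ⟨n, hn⟩ := iht hF.2
    exact ⟨max m n, subset_inter ((cone_antitone (le_max_left m n)).trans hm)
      ((cone_antitone (le_max_right m n)).trans hn)⟩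
  | sUnion S _ ih =>
    obtain ⟨s, hs, hF⟩ := hF
    obtain ⟨n, hn⟩ := ih s hs hF
    exact ⟨n, hn.trans (subset_sUnion_of_mem hs)⟩

theorem exists_forall_cone_subset_or_not (hσ : IsToeplitz σ) (X : Set (alternating σ τ)) (n₀ : ℕ)
    (B : alternating σ τ) : ∃ C ∈ cone n₀ B B, ∀ n ≥ n₀, ∀ F, Coarsens F.1 C.1 →
      cone n F C ⊆ X ∨ ∀ G ∈ cone n F C, ¬ cone n G G ⊆ X := by
  refine exists_diagonal hσ (Q := fun n s => s ⊆ X ∨ ∀ G ∈ s, ¬ cone n G G ⊆ X)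
    (fun n s t hst => Or.imp hst.trans fun h G hG => h G (hst hG)) fun n _ F _ => ?_
  by_cases h : ∃ G ∈ cone n F F, cone n G G ⊆ X
  · obtain ⟨G, hG, hGX⟩ := h
    exact ⟨G, hG, .inl hGX⟩
  · push Not at h
    exact ⟨F, self_mem_cone (Coarsens.refl _), .inr h⟩

theorem exists_forall_cone_subset_or_not_succ (hσ : IsToeplitz σ) (X : Set (alternating σ τ))
    (n₀ : ℕ) (B : alternating σ τ) : ∃ C ∈ cone n₀ B B, ∀ n ≥ n₀, ∀ F, Coarsens F.1 C.1 →
      cone n F C ⊆ X ∨ ∀ G ∈ cone n F C, ¬ cone (n + 1) G G ⊆ X := by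
  obtain ⟨C₁, hC₁B, hC₁⟩ := exists_forall_cone_subset_or_not hσ X n₀ B
  refine (exists_diagonal hσ (Q := fun n s => s ⊆ X ∨ ∀ G ∈ s, ¬ cone (n + 1) G G ⊆ X)
    (fun n s t hst => Or.imp hst.trans fun h G hG => h G (hst hG)) fun n hn F hF => ?_).imp
    fun C => And.imp_left (cone_trans hC₁B)
  obtain ⟨A, hA, h⟩ := exists_homogeneous_cone hσ n F fun a => basicSet _ a C₁ ⊆ X
  refine ⟨A, hA, ?_⟩
  have hle {G : alternating σ τ} (hG : G ∈ cone n A A) : Coarsens G.1 C₁.1 :=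
    (hG.1.trans hA.1).trans hF
  refine h.imp (fun h G hG => h G hG (self_mem_cone (hle hG))) fun h G hG => ?_
  exact ((hC₁ (n + 1) (by omega) G (hle hG)).resolve_left (h G hG)) G (self_mem_cone (hle hG))

theorem exists_cone_subset_or_forall_not (hσ : IsToeplitz σ) (X : Set (alternating σ τ)) (n₀ : ℕ)
    (B : alternating σ τ) : ∃ C ∈ cone n₀ B B,
      cone n₀ C C ⊆ X ∨ ∀ G ∈ cone n₀ C C, ∀ n, ¬ cone n G G ⊆ X := by
  obtain ⟨C, hCB, hC⟩ := exists_forall_cone_subset_or_not_succ hσ X n₀ B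
  refine ⟨C, hCB, (hC n₀ le_rfl C (Coarsens.refl _)).imp_right fun hbase G hG => ?_⟩
  have hge (n : ℕ) (hn : n₀ ≤ n) : ¬ cone n G G ⊆ X := by
    induction n, hn using Nat.le_induction with
    | base => exact fun h => hbase G hG ((cone_antitone n₀.le_succ).trans h)
    | succ n hn ih =>
      refine (hC n hn G hG.1).elim (fun h => absurd ((cone_subset hG.1).trans h) ih) fun h => ?_
      exact h G (self_mem_cone hG.1)
  exact fun n hn => hge (max n n₀) (le_max_right _ _) ((cone_antitone (le_max_left _ _)).trans hn)

theorem isRamsey_of_isOpen (hσ : IsToeplitz σ) (hU : IsOpen U) : IsRamsey (alternating σ τ) U := by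
  refine isRamsey_iff.mpr fun n F => ?_
  obtain ⟨C, hC, h⟩ := exists_cone_subset_or_forall_not hσ U n F
  refine ⟨C, hC, h.imp_right fun h => disjoint_left.mpr fun G hG hGU => ?_⟩
  obtain ⟨m, hm⟩ := exists_cone_subset_of_isOpen hU hGU
  exact h G hG m hm

theorem exists_cone_subset_of_dense (hσ : IsToeplitz σ) (hUd : Dense U) (hU : IsOpen U) (n : ℕ)
    (F : alternating σ τ) : ∃ A ∈ cone n F F, cone n A A ⊆ U := by
  obtain ⟨A, hA, h | h⟩ := isRamsey_iff.mp (isRamsey_of_isOpen hσ hU) n F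
  · exact ⟨A, hA, h⟩
  · obtain ⟨G, hG, hGU⟩ :=
      hUd.inter_open_nonempty _ (isOpen_cone n A A) ⟨A, self_mem_cone (Coarsens.refl _)⟩
    exact absurd hGU (disjoint_left.mp h hG)

theorem exists_antitone_dense_of_isMeagre {Y : Type*} [TopologicalSpace Y] {X : Set Y}
    (hX : IsMeagre X) : ∃ U : ℕ → Set Y, Antitone U ∧ (∀ n, IsOpen (U n)) ∧ (∀ n, Dense (U n)) ∧
      Disjoint (⋂ n, U n) X := by
  obtain ⟨S, hSo, hSd, hS, hSX⟩ := mem_residual_iff.mp hX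
  obtain ⟨V, hV⟩ := (hS.insert univ).exists_eq_range (insert_nonempty _ _)
  have hVk (k : ℕ) : IsOpen (V k) ∧ Dense (V k) := by
    rcases hV ▸ mem_range_self k with h | h
    exacts [h ▸ ⟨isOpen_univ, dense_univ⟩, ⟨hSo _ h, hSd _ h⟩]
  have hfin (n : ℕ) : (V '' Iic n).Finite := (finite_Iic n).image V
  refine ⟨fun n => ⋂₀ (V '' Iic n),
    fun m n hmn => sInter_subset_sInter (image_mono (Iic_subset_Iic.mpr hmn)),
    fun n => (hfin n).isOpen_sInter (forall_mem_image.mpr fun k _ => (hVk k).1),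
    fun n => (hfin n).dense_sInter (forall_mem_image.mpr fun k _ => (hVk k).1)
      (forall_mem_image.mpr fun k _ => (hVk k).2), ?_⟩
  refine disjoint_left.mpr fun x hx => hSX (mem_sInter.mpr fun s hs => ?_)
  obtain ⟨k, rfl⟩ := hV ▸ mem_insert_of_mem univ hs
  exact mem_iInter.mp hx k _ (mem_image_of_mem V self_mem_Iic)

theorem isRamseyNull_of_isMeagre (hσ : IsToeplitz σ) (hX : IsMeagre X) :
    IsRamseyNull (alternating σ τ) X := by
  obtain ⟨U, hU, hUo, hUd, hUX⟩ := exists_antitone_dense_of_isMeagre hX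
  refine isRamseyNull_iff.mpr fun n₀ B => ?_
  refine (exists_diagonal hσ (B := B) (Q := fun n s => s ⊆ U n) (fun n s t hst => hst.trans)
    fun n _ F _ => exists_cone_subset_of_dense hσ (hUd n) (hUo n) n F).imp
    fun C => And.imp_right fun h => hUX.mono_left fun G hG => mem_iInter.mpr fun k => ?_
  exact hU (le_max_left k n₀)
    (h (max k n₀) (le_max_right k n₀) G hG.1 (self_mem_cone hG.1))

theorem isMeagre_of_isRamseyNull (hX : IsRamseyNull (alternating σ τ) X) : IsMeagre X := by
  refine IsNowhereDense.isMeagre (eq_empty_of_forall_notMem fun F hF => ?_)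
  obtain ⟨n, hn⟩ := exists_cone_subset_of_isOpen isOpen_interior hF
  obtain ⟨A, hA, hAX⟩ := isRamseyNull_iff.mp hX n F
  obtain ⟨G, hG, hGX⟩ := mem_closure_iff.mp (interior_subset (hn hA)) _ (isOpen_cone n A A)
    (self_mem_cone (Coarsens.refl _))
  exact disjoint_left.mp hAX hG hGX

theorem isRamsey_of_hasBP (hσ : IsToeplitz σ) (hX : HasBP (alternating σ τ) X) :
    IsRamsey (alternating σ τ) X := by
  obtain ⟨O, M, hO, hM, rfl⟩ := hX
  refine isRamsey_iff.mpr fun n F => ?_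
  obtain ⟨A₁, hA₁F, hA₁⟩ := isRamseyNull_iff.mp (isRamseyNull_of_isMeagre hσ hM) n F
  obtain ⟨A, hAA₁, hA⟩ := isRamsey_iff.mp (isRamsey_of_isOpen hσ hO) n A₁
  have hAM : Disjoint (cone n A A) M := hA₁.mono_left (cone_self_subset hAA₁)
  refine ⟨A, cone_trans hA₁F hAA₁, hA.imp (fun h => ?_) fun h => ?_⟩
  · exact subset_union_of_subset_left (subset_sdiff.mpr ⟨h, hAM⟩) _
  · exact (h.mono_right sdiff_subset).union_right (hAM.mono_right sdiff_subset)

theorem hasBP_of_isRamsey (hX : IsRamsey (alternating σ τ) X) : HasBP (alternating σ τ) X := by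
  refine ⟨interior X, X \ interior X, isOpen_interior,
    isMeagre_of_isRamseyNull (isRamseyNull_iff.mpr fun n F => ?_), ?_⟩
  · obtain ⟨A, hA, h⟩ := isRamsey_iff.mp hX n F
    refine ⟨A, hA, h.elim (fun h => ?_) fun h => h.mono_right sdiff_subset⟩
    exact disjoint_sdiff_right.mono_left (interior_maximal h (isOpen_cone n A A))
  · rw [disjoint_sdiff_right.sdiff_eq_left, disjoint_sdiff_left.sdiff_eq_left,
      union_sdiff_cancel interior_subset]

end Ellentuck

theorem exists_eq_preimage_singleton {ι α : Type*} {P : ι → Set α}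
    (hdisj : Pairwise (Function.onFun Disjoint P)) (hcov : ⋃ i, P i = univ) :
    ∃ τ : α → ι, P = fun i => τ ⁻¹' {i} := by
  choose τ hτ using fun x => mem_iUnion.mp (hcov.symm ▸ mem_univ x)
  refine ⟨τ, funext fun i => ext fun x => ⟨fun hx => ?_, fun hx => hx ▸ hτ x⟩⟩
  by_contra hne
  exact disjoint_left.mp (hdisj hne) (hτ x) hx

theorem EPaltInfIsTopologicalRamseySpace_general {ι : Type*} {σ : ℕ → ι} (hσ : IsToeplitz σ)
    (τ : ℕ → ι) (X : Set ↥(alternating σ τ)) :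
    (HasBP (alternating σ τ) X ↔ IsRamsey (alternating σ τ) X) ∧
    (@IsMeagre _ (ellentuckTop (alternating σ τ)) X ↔ IsRamseyNull (alternating σ τ) X) :=
  ⟨⟨isRamsey_of_hasBP hσ, hasBP_of_isRamsey⟩,
    ⟨isRamseyNull_of_isMeagre hσ, isMeagre_of_isRamseyNull⟩⟩

/-- **Theorem 5.1:** for an infinite partition `P`, `(𝓔^P_∞, ≤, r)` is a topological
Ramsey space: a set `𝓧 ⊆ 𝓔^P_∞` has the property of Baire with respect to the
Ellentuck topology iff it is Ramsey, and it is Ellentuck-meagre iff it is Ramsey null. -/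
theorem EPaltInfIsTopologicalRamseySpace
    (P : ℕ → Set ℕ)
    (hinf : ∀ i, (P i).Infinite)
    (hdisj : ∀ i j, i ≠ j → Disjoint (P i) (P j))
    (hcov : ⋃ i, P i = Set.univ)
    (hmin : ∀ i j : ℕ, i < j → sInf (P i) < sInf (P j))
    (X : Set ↥(EPaltInf P)) :
    (HasBP (EPaltInf P) X ↔ IsRamsey (EPaltInf P) X) ∧
    (@IsMeagre _ (ellentuckTop (EPaltInf P)) X ↔ IsRamseyNull (EPaltInf P) X) := by
  obtain ⟨τ, rfl⟩ := exists_eq_preimage_singleton (fun i j => hdisj i j) hcov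
  exact EPaltInfIsTopologicalRamseySpace_general isToeplitz_sigmaSeq τ X

end DualRamsey
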